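/- Let q be an integer with q ≥ 3 and let A ⊂ ℚ be a finite set with #A = q. Then K(q,A) has positive Lebesgue measure if and only if there exists an integer p ≥ 2 with gcd(p,q) = 1 such that the intersection D_p ∩ K(q,A) is an infinite set. -/

import Mathlib

open MeasureTheory

/-- The self-similar set `K(q,A) = { ∑_{i=1}^∞ a_i/q^i : a_i ∈ A }`. -/
noncomputable def Kset (q : ℕ) (A : Finset ℚ) : Set ℝ :=
  { x : ℝ | ∃ a : ℕ → ℚ, (∀ i, a i ∈ A) ∧ x = ∑' i : ℕ, (a i : ℝ) / (q : ℝ) ^ (i + 1) }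

/-- The set `D_p = ⋃_{n≥1} ℤ/pⁿ` of rationals with a finite `p`-ary expansion. -/
def Dset (p : ℕ) : Set ℝ :=
  { x : ℝ | ∃ n : ℕ, 1 ≤ n ∧ ∃ m : ℤ, x = (m : ℝ) / (p : ℝ) ^ n }

/-!
After scaling we may take the digits to be integers. Let `N n` be the number of distinct `n`-digit
sums; it is submultiplicative, which gives a dichotomy.

* If `N n ≥ q ^ n` for all `n`, then the `q ^ (-n)`-neighbourhoods of `K` have measure at least
  `1`, hence so has the compact set `K`.
* Otherwise `N n / q ^ n → 0`. Suppose a reduced fraction `s / d` with `d ∣ p ^ k` lies in `K`.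
  Since `K` mod `1` is invariant under multiplication by `q`, at least `ord_d q` fractions with
  denominator `d` lie in `K`, and by lifting the exponent `ord_d q` is at least a constant multiple
  of `d`. On the other hand, if `q ^ (n - 1) ≤ d < q ^ n`, covering `K` by its `n`-th level pieces
  leaves room for only `O(N n) = o(d)` such fractions. Hence `d` is bounded and `D_p ∩ K` is finite.

Conversely, if `K` has positive measure, then by ergodicity of multiplication by `q` on the circle
`K` covers the whole circle mod `1`, so by Baire it has interior points, and it contains infinitely
many points of the dense set `D_p`.
-/

open Filter Topology Set
open scoped Finset Pointwise ENNReal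

section Kset

variable {q : ℕ} {A : Finset ℚ}

lemma exists_summable_bound_digits (hq : 1 < q) (A : Finset ℚ) :
    ∃ u : ℕ → ℝ, Summable u ∧ ∀ i, ∀ a ∈ A, ‖(a : ℝ) / (q : ℝ) ^ (i + 1)‖ ≤ u i := by
  refine ⟨fun i ↦ (∑ b ∈ A, |(b : ℝ)|) * (q : ℝ)⁻¹ ^ (i + 1), ?_, fun i a ha ↦ ?_⟩
  · have hq' : (q : ℝ)⁻¹ < 1 := inv_lt_one_of_one_lt₀ (by exact_mod_cast hq)
    exact ((summable_nat_add_iff 1).2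
      (summable_geometric_of_lt_one (by positivity) hq')).mul_left _
  · rw [norm_div, Real.norm_eq_abs, norm_pow, Real.norm_natCast, div_eq_mul_inv, ← inv_pow]
    beta_reduce
    gcongr
    exact Finset.single_le_sum (f := fun b : ℚ ↦ |(b : ℝ)|) (fun _ _ ↦ abs_nonneg _) ha

lemma mul_tsum_digits (hq : 1 < q) {a : ℕ → ℚ} (ha : ∀ i, a i ∈ A) :
    (q : ℝ) * ∑' i, (a i : ℝ) / (q : ℝ) ^ (i + 1) =
      a 0 + ∑' i, (a (i + 1) : ℝ) / (q : ℝ) ^ (i + 1) := by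
  obtain ⟨u, hu, hbound⟩ := exists_summable_bound_digits hq A
  have hsum : Summable fun i ↦ (a i : ℝ) / (q : ℝ) ^ (i + 1) :=
    hu.of_norm_bounded fun i ↦ hbound i _ (ha i)
  rw [hsum.tsum_eq_zero_add, mul_add, ← tsum_mul_left]
  congr 1
  · field_simp
    ring
  · congr 1 with i
    field_simp
    ring

lemma mem_Kset_iff (hq : 1 < q) (x : ℝ) :
    x ∈ Kset q A ↔ ∃ a ∈ A, (q : ℝ) * x - a ∈ Kset q A := by
  constructor
  · rintro ⟨a, ha, rfl⟩
    exact ⟨a 0, ha 0, fun i ↦ a (i + 1), fun i ↦ ha _, by rw [mul_tsum_digits hq ha]; ring⟩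
  · rintro ⟨b, hb, a, ha, hx⟩
    let c : ℕ → ℚ := fun i ↦ Nat.casesOn i b a
    have hc : ∀ i, c i ∈ A
      | 0 => hb
      | i + 1 => ha i
    refine ⟨c, hc, mul_left_cancel₀ (by positivity : (q : ℝ) ≠ 0) ?_⟩
    rw [mul_tsum_digits hq hc]
    exact sub_eq_iff_eq_add'.1 hx

lemma isCompact_Kset (hq : 1 < q) (A : Finset ℚ) : IsCompact (Kset q A) := by
  have hrange : Kset q A =
      range fun a : ℕ → A ↦ ∑' i, ((a i : ℚ) : ℝ) / (q : ℝ) ^ (i + 1) := by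
    ext x
    constructor
    · rintro ⟨a, ha, rfl⟩
      exact ⟨fun i ↦ ⟨a i, ha i⟩, rfl⟩
    · rintro ⟨a, rfl⟩
      exact ⟨fun i ↦ a i, fun i ↦ (a i).2, rfl⟩
  obtain ⟨u, hu, hbound⟩ := exists_summable_bound_digits hq A
  rw [hrange]
  exact isCompact_range <| continuous_tsum
    (fun i ↦ (Rat.continuous_coe_real.comp (by fun_prop)).div_const _) hu
    fun i a ↦ hbound i _ (a i).2

end Kset

section SelfSimilar

/-- The set equation `K = ⋃_{b ∈ B} (K + b)/q` of the self-similar set with ratio `1/q` and integer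
digit set `B`, stated pointwise; for `q > 1` it determines `K` among the nonempty compact sets. -/
def IsSelfSimilar (q : ℕ) (B : Finset ℤ) (K : Set ℝ) : Prop :=
  ∀ x : ℝ, x ∈ K ↔ ∃ b ∈ B, (q : ℝ) * x - b ∈ K

/-- The set of the integers `∑_{i < n} b_i q^i` with all digits `b_i` in `B`. -/
def digitSums (q : ℕ) (B : Finset ℤ) : ℕ → Finset ℤ
  | 0 => {0}
  | n + 1 => Finset.image₂ (fun c b ↦ q * c + b) (digitSums q B n) B

variable {q : ℕ} {B : Finset ℤ} {K : Set ℝ}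

lemma digitSums_add (m n : ℕ) :
    digitSums q B (m + n) =
      Finset.image₂ (fun c b ↦ (q : ℤ) ^ n * c + b) (digitSums q B m) (digitSums q B n) := by
  induction n with
  | zero => simp [digitSums]
  | succ n ih =>
    rw [← add_assoc, digitSums, ih, digitSums]
    exact Finset.image₂_assoc fun a b c ↦ by ring

lemma card_digitSums_add_le (m n : ℕ) :
    #(digitSums q B (m + n)) ≤ #(digitSums q B m) * #(digitSums q B n) := by
  rw [digitSums_add]
  exact Finset.card_image₂_le _ _ _

namespace IsSelfSimilar

lemma exists_int_mem (h : IsSelfSimilar q B K) : ∀ x ∈ K, ∃ n : ℤ, (q : ℝ) * x - n ∈ K :=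
  fun x hx ↦ let ⟨b, _, hb⟩ := (h x).1 hx; ⟨b, hb⟩

lemma comp {r : ℕ} {C : Finset ℤ} (hB : IsSelfSimilar q B K) (hC : IsSelfSimilar r C K) :
    IsSelfSimilar (q * r) (Finset.image₂ (fun c b ↦ q * c + b) C B) K := by
  intro x
  simp only [Finset.exists_mem_image₂]
  rw [hC x]
  refine exists_congr fun c ↦ and_congr_right fun _ ↦ (hB _).trans ?_
  refine exists_congr fun b ↦ and_congr_right fun _ ↦ iff_of_eq ?_
  congr 1
  push_cast
  ring

lemma iterate (h : IsSelfSimilar q B K) (n : ℕ) :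
    IsSelfSimilar (q ^ n) (digitSums q B n) K := by
  induction n with
  | zero => simp [IsSelfSimilar, digitSums]
  | succ n ih =>
    rw [pow_succ']
    exact h.comp ih

end IsSelfSimilar

lemma exists_isSelfSimilar_smul_Kset (hq : 1 < q) (A : Finset ℚ) :
    ∃ D : ℤ, D ≠ 0 ∧ ∃ B : Finset ℤ, IsSelfSimilar q B ((D : ℝ) • Kset q A) := by
  obtain ⟨⟨D, hD⟩, hint⟩ :=
    IsLocalization.exist_integer_multiples_of_finset (nonZeroDivisors ℤ) A
  replace hD : D ≠ 0 := nonZeroDivisors.ne_zero hD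
  have hD' : (D : ℝ) ≠ 0 := by exact_mod_cast hD
  choose! f hf using hint
  have hf' (a) (ha : a ∈ A) : (f a : ℝ) = D * a := by
    have := hf a ha
    simp only [algebraMap_int_eq, eq_intCast, zsmul_eq_mul] at this
    exact_mod_cast congrArg (Rat.cast : ℚ → ℝ) this
  refine ⟨D, hD, A.image f, fun x ↦ ?_⟩
  simp only [Finset.exists_mem_image, mem_smul_set_iff_inv_smul_mem₀ hD', smul_eq_mul]
  rw [mem_Kset_iff hq]
  refine exists_congr fun a ↦ and_congr_right fun ha ↦ iff_of_eq ?_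
  rw [hf' a ha]
  congr 1
  field_simp

end SelfSimilar

section Interior

lemma volume_preimage_coe_unitAddCircle_eq_zero {S : Set UnitAddCircle} (hS : volume S = 0) :
    volume ((↑) ⁻¹' S : Set ℝ) = 0 := by
  rw [← inter_univ (_ ⁻¹' S), ← iUnion_Ioc_intCast, inter_iUnion]
  refine measure_iUnion_null fun n ↦ ?_
  rw [← Measure.restrict_apply' measurableSet_Ioc]
  exact (UnitAddCircle.measurePreserving_mk n).quasiMeasurePreserving.preimage_null hS

lemma eq_univ_of_mapsTo_nsmul {q : ℕ} (hq : 1 < q) {S : Set UnitAddCircle} (hS : IsClosed S)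
    (hmaps : MapsTo (q • ·) S S) (hpos : volume S ≠ 0) : S = univ := by
  have hergodic : Ergodic fun y : UnitAddCircle ↦ q • y := AddCircle.ergodic_nsmul hq
  rcases hergodic.ae_empty_or_univ_of_ae_le_preimage hS.measurableSet.nullMeasurableSet
    (Eventually.of_forall hmaps) with h | h
  · exact absurd (ae_eq_empty.1 h) hpos
  · exact hS.ae_eq_univ_iff_eq.1 h

lemma interior_nonempty_of_image_coe_eq_univ {K : Set ℝ} (hK : IsClosed K)
    (huniv : ((↑) '' K : Set UnitAddCircle) = univ) : (interior K).Nonempty := by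
  have hcover : ⋃ n : ℤ, (n : ℝ) +ᵥ K = univ := by
    refine eq_univ_of_forall fun x ↦ ?_
    obtain ⟨y, hy, hyx⟩ := huniv.ge (mem_univ (x : UnitAddCircle))
    obtain ⟨n, hn⟩ := (AddCircle.coe_eq_zero_iff (1 : ℝ)).1
      (AddCircle.coe_sub (p := 1) x y ▸ sub_eq_zero.2 hyx.symm)
    refine mem_iUnion.2 ⟨n, y, hy, ?_⟩
    rw [zsmul_one] at hn
    simp only [vadd_eq_add, hn, sub_add_cancel]
  obtain ⟨n, hn⟩ := nonempty_interior_of_iUnion_of_closed (fun n : ℤ ↦ hK.vadd (n : ℝ)) hcover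
  rwa [interior_vadd, vadd_set_nonempty] at hn

theorem interior_nonempty_of_volume_ne_zero {q : ℕ} (hq : 1 < q) {K : Set ℝ} (hK : IsCompact K)
    (hinv : ∀ x ∈ K, ∃ n : ℤ, (q : ℝ) * x - n ∈ K) (hpos : volume K ≠ 0) :
    (interior K).Nonempty := by
  refine interior_nonempty_of_image_coe_eq_univ hK.isClosed <| eq_univ_of_mapsTo_nsmul hq
    (hK.image (AddCircle.continuous_mk' 1)).isClosed ?_ fun hzero ↦ hpos ?_
  · rintro _ ⟨x, hx, rfl⟩
    obtain ⟨n, hn⟩ := hinv x hx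
    refine ⟨_, hn, ?_⟩
    have hn0 : ((n : ℝ) : UnitAddCircle) = 0 := (AddCircle.coe_eq_zero_iff 1).2 ⟨n, by simp⟩
    rw [AddCircle.coe_sub, hn0, sub_zero, ← nsmul_eq_mul, AddCircle.coe_nsmul]
  · exact measure_mono_null (subset_preimage_image _ _)
      (volume_preimage_coe_unitAddCircle_eq_zero hzero)

lemma interior_Kset_nonempty {q : ℕ} (hq : 1 < q) {A : Finset ℚ} (hpos : 0 < volume (Kset q A)) :
    (interior (Kset q A)).Nonempty := by
  obtain ⟨D, hD, B, hB⟩ := exists_isSelfSimilar_smul_Kset hq A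
  have hD' : (D : ℝ) ≠ 0 := by exact_mod_cast hD
  have hint := interior_nonempty_of_volume_ne_zero hq ((isCompact_Kset hq A).smul (D : ℝ))
    hB.exists_int_mem (by simp [Measure.addHaar_smul, hD', hpos.ne'])
  rwa [interior_smul₀ hD', smul_set_nonempty] at hint

lemma dense_Dset {p : ℕ} (hp : 1 < p) : Dense (Dset p) := by
  refine dense_of_exists_between fun a b hab ↦ ?_
  have hp' : (1 : ℝ) < p := by exact_mod_cast hp
  obtain ⟨n, hn⟩ := pow_unbounded_of_one_lt (b - a)⁻¹ hp'
  have hn' : (b - a)⁻¹ < ((p ^ (n + 1) : ℕ) : ℝ) := by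
    push_cast
    exact hn.trans (pow_lt_pow_right₀ hp' n.lt_succ_self)
  obtain ⟨m, hm⟩ := exists_div_btwn hab hn'
  push_cast at hm
  exact ⟨_, ⟨n + 1, by lia, m, rfl⟩, hm⟩

lemma infinite_inter_of_dense {X : Type*} [TopologicalSpace X] [T1Space X]
    [∀ x : X, NeBot (𝓝[≠] x)] {S K : Set X} (hS : Dense S) (hK : (interior K).Nonempty) :
    (S ∩ K).Infinite := by
  intro hfin
  obtain ⟨x, hxK, hxS, hx⟩ :=
    (hS.sdiff_finite hfin).inter_open_nonempty _ isOpen_interior hK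
  exact hx ⟨hxS, interior_subset hxK⟩

end Interior

section Dichotomy

lemma tendsto_zero_of_submultiplicative {v : ℕ → ℝ} (hnonneg : ∀ n, 0 ≤ v n)
    (hmul : ∀ m n, v (m + n) ≤ v m * v n) {m : ℕ} (hm : m ≠ 0) (hlt : v m < 1) :
    Tendsto v atTop (𝓝 0) := by
  have hpow (k j : ℕ) : v (m * k + j) ≤ v m ^ k * v j := by
    induction k with
    | zero => simp
    | succ k ih =>
      calc v (m * (k + 1) + j) = v (m + (m * k + j)) := by ring_nf
        _ ≤ v m * v (m * k + j) := hmul _ _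
        _ ≤ v m * (v m ^ k * v j) := by gcongr; exact hnonneg m
        _ = v m ^ (k + 1) * v j := by ring
  have hbound (n : ℕ) : v n ≤ v m ^ (n / m) * ∑ j ∈ Finset.range m, v j := by
    calc v n = v (m * (n / m) + n % m) := by rw [Nat.div_add_mod]
      _ ≤ v m ^ (n / m) * v (n % m) := hpow _ _
      _ ≤ v m ^ (n / m) * ∑ j ∈ Finset.range m, v j := by
        gcongr
        · exact pow_nonneg (hnonneg m) _
        · exact Finset.single_le_sum (fun j _ ↦ hnonneg j)
            (Finset.mem_range.2 (Nat.mod_lt n hm.bot_lt))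
  have hlim : Tendsto (fun n ↦ v m ^ (n / m) * ∑ j ∈ Finset.range m, v j) atTop (𝓝 0) := by
    have hpow_lim := (tendsto_pow_atTop_nhds_zero_of_lt_one (hnonneg m) hlt).comp
      (Nat.tendsto_div_const_atTop hm)
    simpa only [zero_mul, Function.comp_apply] using hpow_lim.mul_const _
  exact squeeze_zero hnonneg hbound hlim

variable {q : ℕ} {B : Finset ℤ} {K : Set ℝ}

lemma tendsto_card_digitSums_div_pow {m : ℕ} (hm : #(digitSums q B m) < q ^ m) :
    Tendsto (fun n ↦ (#(digitSums q B n) : ℝ) / (q : ℝ) ^ n) atTop (𝓝 0) := by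
  have hm0 : m ≠ 0 := by
    rintro rfl
    simp [digitSums] at hm
  refine tendsto_zero_of_submultiplicative (fun n ↦ by positivity) (fun k n ↦ ?_) hm0 ?_
  · rw [pow_add, div_mul_div_comm]
    gcongr
    exact_mod_cast card_digitSums_add_le k n
  · have hpos : 0 < q ^ m := hm.pos
    rw [div_lt_one (by exact_mod_cast hpos)]
    exact_mod_cast hm

-- For a fixed `k ∈ K` the unit intervals to the right of the points `k + b`, `b ∈ B`, are disjoint,
-- and `(k + b) / q ∈ K`.
lemma IsSelfSimilar.card_le_mul_volume_cthickening (h : IsSelfSimilar q B K) (hq : q ≠ 0)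
    (hK : K.Nonempty) : (#B : ℝ≥0∞) ≤ q * volume (Metric.cthickening (q : ℝ)⁻¹ K) := by
  obtain ⟨k, hk⟩ := hK
  have hq' : (0 : ℝ) < q := by positivity
  have hcover : ⋃ b ∈ B, Ico (k + b) (k + b + 1) ⊆
      ((q : ℝ)⁻¹ * ·) ⁻¹' Metric.cthickening (q : ℝ)⁻¹ K := by
    refine iUnion₂_subset fun b hb x hx ↦ ?_
    have hbK : (q : ℝ)⁻¹ * (k + b) ∈ K := (h _).2 ⟨b, hb, by
      rwa [mul_inv_cancel_left₀ hq'.ne', add_sub_cancel_right]⟩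
    refine Metric.mem_cthickening_of_dist_le _ _ _ _ hbK ?_
    rw [Real.dist_eq, ← mul_sub, abs_mul, abs_of_pos (inv_pos.2 hq')]
    exact mul_le_of_le_one_right (by positivity)
      (abs_le.2 ⟨by linarith [hx.1], by linarith [hx.2]⟩)
  have hvol : volume (⋃ b ∈ B, Ico (k + b) (k + b + 1)) = #B := by
    rw [measure_biUnion_finset (fun b _ c _ hbc ↦ pairwise_disjoint_Ico_add_intCast k hbc)
      fun _ _ ↦ measurableSet_Ico]
    simp
  calc (#B : ℝ≥0∞) = volume (⋃ b ∈ B, Ico (k + b) (k + b + 1)) := hvol.symm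
    _ ≤ volume (((q : ℝ)⁻¹ * ·) ⁻¹' Metric.cthickening (q : ℝ)⁻¹ K) := measure_mono hcover
    _ = q * volume (Metric.cthickening (q : ℝ)⁻¹ K) := by
      rw [Real.volume_preimage_mul_left (inv_ne_zero hq'.ne'), inv_inv, abs_of_pos hq',
        ENNReal.ofReal_natCast]

theorem IsSelfSimilar.one_le_volume (h : IsSelfSimilar q B K) (hq : 1 < q) (hK : IsCompact K)
    (hne : K.Nonempty) (hcard : ∀ n, q ^ n ≤ #(digitSums q B n)) : 1 ≤ volume K := by
  have hthick (n : ℕ) : 1 ≤ volume (Metric.cthickening ((q ^ n : ℕ) : ℝ)⁻¹ K) := by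
    have hn : q ^ n ≠ 0 := by positivity
    rw [← ENNReal.mul_le_mul_iff_right (a := ((q ^ n : ℕ) : ℝ≥0∞)) (by exact_mod_cast hn)
      (ENNReal.natCast_ne_top _), mul_one]
    exact le_trans (by exact_mod_cast hcard n)
      ((h.iterate n).card_le_mul_volume_cthickening hn hne)
  have hlim : Tendsto (fun n : ℕ ↦ ((q ^ n : ℕ) : ℝ)⁻¹) atTop (𝓝 0) := by
    simpa only [Function.comp_def] using tendsto_inv_atTop_nhds_zero_nat.comp
      (tendsto_pow_atTop_atTop_of_one_lt hq)
  exact ge_of_tendsto' ((tendsto_measure_cthickening_of_isCompact hK).comp hlim) hthick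

end Dichotomy

section MultiplicativeOrder

variable {p q : ℕ}

lemma emultiplicity_pow_sub_one {l : ℕ} (hl : l.Prime) {a : ℤ} (ha : (l : ℤ) ^ 2 ∣ a - 1) (n : ℕ) :
    emultiplicity (l : ℤ) (a ^ n - 1) =
      emultiplicity (l : ℤ) (a - 1) + emultiplicity (l : ℤ) n := by
  have hl1 : (l : ℤ) ∣ a - 1 := (dvd_pow_self _ two_ne_zero).trans ha
  have hla : ¬(l : ℤ) ∣ a := fun hdvd ↦ by
    have : (l : ℤ) ∣ 1 := by simpa using dvd_sub hdvd hl1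
    exact (Nat.prime_iff_prime_int.1 hl).not_dvd_one this
  rcases hl.eq_two_or_odd' with rfl | hodd
  · simpa using Int.two_pow_sub_pow' (y := 1) n (by simpa using ha) (by simpa using hla)
  · simpa [Int.natCast_emultiplicity] using
      Int.emultiplicity_pow_sub_pow (y := 1) hl hodd hl1 hla n

lemma dvd_sub_one_mul_of_dvd_pow_sub_one {a : ℤ} (ha : (p : ℤ) ^ 2 ∣ a - 1) {d k : ℕ}
    (hd : d ∣ p ^ k) {n : ℕ} (hdn : (d : ℤ) ∣ a ^ n - 1) : (d : ℤ) ∣ (a - 1) * n := by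
  rw [Int.natCast_dvd, Nat.dvd_iff_prime_pow_dvd_dvd]
  intro l j hl hj
  rcases eq_or_ne j 0 with rfl | hj0
  · simp
  have hlp : l ∣ p := hl.dvd_of_dvd_pow ((dvd_pow_self l hj0).trans (hj.trans hd))
  have hla : (l : ℤ) ^ 2 ∣ a - 1 := (pow_dvd_pow_of_dvd (Int.natCast_dvd_natCast.2 hlp) 2).trans ha
  have hjn : (l : ℤ) ^ j ∣ a ^ n - 1 := dvd_trans (by exact_mod_cast hj) hdn
  have hmult := le_emultiplicity_of_pow_dvd hjn
  rw [emultiplicity_pow_sub_one hl hla, ← emultiplicity_mul (Nat.prime_iff_prime_int.1 hl)] at hmult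
  rw [← Int.natCast_dvd]
  exact_mod_cast pow_dvd_of_le_emultiplicity hmult

lemma exists_le_mul_orderOf (hq : 1 < q) (hpq : p.Coprime q) :
    ∃ M : ℕ, ∀ d k : ℕ, d ∣ p ^ k → d ≤ M * orderOf (q : ZMod d) := by
  have hp : 0 < p := Nat.pos_of_ne_zero fun hp ↦ by simp_all
  set t := (p ^ 2).totient
  have ht0 : t ≠ 0 := (Nat.totient_pos.2 (by positivity)).ne'
  have hone : 1 < q ^ t := Nat.one_lt_pow ht0 hq
  have hcast : ((q ^ t - 1 : ℕ) : ℤ) = (q : ℤ) ^ t - 1 := by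
    rw [Nat.cast_sub hone.le]
    simp
  have heuler : (p : ℤ) ^ 2 ∣ (q : ℤ) ^ t - 1 := by
    have hmod : q ^ t ≡ 1 [MOD p ^ 2] := Nat.ModEq.pow_totient (hpq.symm.pow_right 2)
    exact_mod_cast Nat.modEq_iff_dvd.1 hmod.symm
  refine ⟨q ^ t - 1, fun d k hd ↦ ?_⟩
  have hd0 : d ≠ 0 := ne_zero_of_dvd_ne_zero (by positivity) hd
  have : NeZero d := ⟨hd0⟩
  have hunit : IsUnit (q : ZMod d) :=
    (ZMod.isUnit_iff_coprime q d).2 ((hpq.symm.pow_right k).coprime_dvd_right hd)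
  refine Nat.le_of_dvd (Nat.mul_pos (by lia) hunit.isOfFinOrder.orderOf_pos) ?_
  have horder : (d : ℤ) ∣ ((q : ℤ) ^ t) ^ orderOf (q : ZMod d) - 1 := by
    rw [← ZMod.intCast_zmod_eq_zero_iff_dvd]
    push_cast
    rw [pow_right_comm, pow_orderOf_eq_one, one_pow, sub_self]
  have := dvd_sub_one_mul_of_dvd_pow_sub_one heuler hd horder
  rw [← hcast] at this
  exact_mod_cast this

end MultiplicativeOrder

section Counting

/-- The numerators of the fractions with denominator `d`, not necessarily reduced, that lie
in `K`. -/
def numerators (K : Set ℝ) (d : ℕ) : Set ℤ :=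
  {s | (s : ℝ) / d ∈ K}

variable {p q d : ℕ} {B : Finset ℤ} {K : Set ℝ}

lemma num_mem_numerators {r : ℚ} (hr : (r : ℝ) ∈ K) : r.num ∈ numerators K r.den := by
  rwa [Rat.cast_def] at hr

-- The numerators are closed, modulo `d`, under multiplication by `q`.
lemma orderOf_le_encard_numerators [NeZero d] (hinv : ∀ x ∈ K, ∃ n : ℤ, (q : ℝ) * x - n ∈ K)
    {s : ℤ} (hs : s ∈ numerators K d) (hsd : IsCoprime s d) :
    (orderOf (q : ZMod d) : ℕ∞) ≤ (numerators K d).encard := by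
  have hd : (d : ℝ) ≠ 0 := NeZero.ne _
  have horbit (k : ℕ) : (q : ZMod d) ^ k * s ∈ ((↑) '' numerators K d : Set (ZMod d)) := by
    induction k with
    | zero => exact ⟨s, hs, by simp⟩
    | succ k ih =>
      obtain ⟨t, ht, htk⟩ := ih
      obtain ⟨n, hn⟩ := hinv _ ht
      have hdiv : ((q * t - n * d : ℤ) : ℝ) / d = q * (t / d) - n := by
        push_cast
        field_simp
      rw [← hdiv] at hn
      refine ⟨q * t - n * d, hn, ?_⟩
      push_cast
      rw [htk, ZMod.natCast_self]
      ring
  have hunit : IsUnit (s : ZMod d) := by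
    simpa [isCoprime_zero_right] using hsd.map (Int.castRingHom (ZMod d))
  have hinj : InjOn (fun k ↦ (q : ZMod d) ^ k * s) (Iio (orderOf (q : ZMod d))) :=
    fun i hi j hj hij ↦ pow_injOn_Iio_orderOf hi hj (hunit.mul_right_cancel hij)
  calc (orderOf (q : ZMod d) : ℕ∞)
      = ((fun k ↦ (q : ZMod d) ^ k * s) '' Iio (orderOf (q : ZMod d))).encard := by
        rw [hinj.encard_image, ← Finset.coe_Iio, encard_coe_eq_coe_finsetCard, Nat.card_Iio]
    _ ≤ ((↑) '' numerators K d : Set (ZMod d)).encard :=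
        encard_le_encard (image_subset_iff.2 fun k _ ↦ horbit k)
    _ ≤ (numerators K d).encard := encard_image_le _ _

lemma IsSelfSimilar.encard_numerators_le (h : IsSelfSimilar q B K) {R : ℕ}
    (hR : ∀ x ∈ K, |x| ≤ R) (hd : d ≠ 0) (hdq : d ≤ q) :
    (numerators K d).encard ≤ (#B * (2 * R + 1) : ℕ) := by
  have hd' : (0 : ℝ) < d := by positivity
  have hdq' : (d : ℝ) ≤ q := by exact_mod_cast hdq
  have hq' : (0 : ℝ) < q := hd'.trans_le hdq'
  let near (b : ℤ) : Finset ℤ := Finset.Icc ⌈(b * d / q : ℝ) - R⌉ ⌊(b * d / q : ℝ) + R⌋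
  have hcover : numerators K d ⊆ B.biUnion near := by
    intro s hs
    obtain ⟨b, hb, hbs⟩ := (h _).1 hs
    have hdist : |(s : ℝ) - b * d / q| ≤ R := by
      calc |(s : ℝ) - b * d / q| = |(q : ℝ) * (s / d) - b| * (d / q) := by
            rw [← abs_of_pos (div_pos hd' hq'), ← abs_mul]
            congr 1
            field_simp
        _ ≤ R * 1 := by
            gcongr
            · exact hR _ hbs
            · exact (div_le_one hq').2 hdq'
        _ = R := mul_one _
    rw [abs_le] at hdist
    exact Finset.mem_biUnion.2 ⟨b, hb, Finset.mem_Icc.2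
      ⟨Int.ceil_le.2 (by linarith), Int.le_floor.2 (by linarith)⟩⟩
  have hcard (b : ℤ) : #(near b) ≤ 2 * R + 1 := by
    have := Int.floor_le_ceil (b * d / q : ℝ)
    rw [Int.card_Icc, Int.floor_add_natCast, Int.ceil_sub_natCast]
    lia
  calc (numerators K d).encard ≤ (B.biUnion near : Set ℤ).encard := encard_le_encard hcover
    _ = #(B.biUnion near) := encard_coe_eq_coe_finsetCard _
    _ ≤ (#B * (2 * R + 1) : ℕ) := by
        exact_mod_cast Finset.card_biUnion_le_card_mul _ _ _ fun b _ ↦ hcard b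

lemma IsSelfSimilar.exists_den_le (h : IsSelfSimilar q B K) (hq : 1 < q) (hpq : p.Coprime q)
    {R : ℕ} (hR : ∀ x ∈ K, |x| ≤ R)
    (hlim : Tendsto (fun n ↦ (#(digitSums q B n) : ℝ) / (q : ℝ) ^ n) atTop (𝓝 0)) :
    ∃ Q : ℕ, ∀ (r : ℚ) (k : ℕ), r.den ∣ p ^ k → (r : ℝ) ∈ K → r.den ≤ Q := by
  obtain ⟨M, hM⟩ := exists_le_mul_orderOf hq hpq
  have hsmall : ∀ᶠ n in atTop,
      q * (M * (#(digitSums q B n) * (2 * R + 1))) < q ^ n := by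
    have hconst := hlim.const_mul (q * M * (2 * R + 1) : ℝ)
    rw [mul_zero] at hconst
    filter_upwards [hconst.eventually_lt_const one_pos] with n hn
    rw [← mul_div_assoc, div_lt_one (by positivity)] at hn
    have : q * M * (2 * R + 1) * #(digitSums q B n) < q ^ n := by exact_mod_cast hn
    lia
  obtain ⟨N, hN⟩ := eventually_atTop.1 hsmall
  refine ⟨q ^ N, fun r k hrk hrK ↦ ?_⟩
  by_contra! hlarge
  have : NeZero r.den := ⟨r.den_ne_zero⟩
  obtain ⟨n, hle, hlt⟩ := exists_nat_pow_near r.den_pos hq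
  have hNn : N ≤ n + 1 := ((Nat.pow_lt_pow_iff_right hq).1 (hlarge.trans hlt)).le
  have hcop : IsCoprime r.num (r.den : ℤ) := Int.isCoprime_iff_gcd_eq_one.2 r.reduced
  have horder : orderOf (q : ZMod r.den) ≤ #(digitSums q B (n + 1)) * (2 * R + 1) := by
    have hnum := num_mem_numerators hrK
    exact_mod_cast (orderOf_le_encard_numerators h.exists_int_mem hnum hcop).trans
      ((h.iterate (n + 1)).encard_numerators_le hR r.den_ne_zero hlt.le)
  have : q ^ (n + 1) ≤ q * (M * (#(digitSums q B (n + 1)) * (2 * R + 1))) := by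
    calc q ^ (n + 1) = q * q ^ n := pow_succ' q n
      _ ≤ q * r.den := by gcongr
      _ ≤ q * (M * orderOf (q : ZMod r.den)) := by gcongr; exact hM _ _ hrk
      _ ≤ q * (M * (#(digitSums q B (n + 1)) * (2 * R + 1))) := by gcongr
  exact this.not_gt (hN _ hNn)

lemma exists_rat_den_dvd_of_mem_Dset {x : ℝ} (hx : x ∈ Dset p) :
    ∃ r : ℚ, (r : ℝ) = x ∧ ∃ k : ℕ, r.den ∣ p ^ k := by
  obtain ⟨k, -, m, rfl⟩ := hx
  refine ⟨Rat.divInt m (p ^ k), by simp [Rat.divInt_eq_div], k, ?_⟩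
  exact_mod_cast Rat.den_dvd m (p ^ k)

theorem IsSelfSimilar.finite_Dset_inter (h : IsSelfSimilar q B K) (hq : 1 < q)
    (hpq : p.Coprime q) (hK : Bornology.IsBounded K)
    (hlim : Tendsto (fun n ↦ (#(digitSums q B n) : ℝ) / (q : ℝ) ^ n) atTop (𝓝 0)) :
    (Dset p ∩ K).Finite := by
  obtain ⟨r, hr⟩ := hK.exists_norm_le
  obtain ⟨R, hrR⟩ := exists_nat_ge r
  have hR : ∀ x ∈ K, |x| ≤ R := fun x hx ↦ (hr x hx).trans hrR
  obtain ⟨Q, hQ⟩ := h.exists_den_le hq hpq hR hlim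
  have hfin (d : ℕ) (hd : d ≠ 0) : (numerators K d).Finite :=
    finite_of_encard_le_coe
      ((h.iterate d).encard_numerators_le hR hd (Nat.lt_pow_self hq).le)
  refine ((finite_Icc 1 Q).biUnion fun d hd ↦
    (hfin d (Nat.one_le_iff_ne_zero.1 hd.1)).image fun s : ℤ ↦ (s : ℝ) / d).subset ?_
  rintro _ ⟨hxp, hxK⟩
  obtain ⟨x, rfl, k, hk⟩ := exists_rat_den_dvd_of_mem_Dset hxp
  exact mem_biUnion (x := x.den) ⟨x.den_pos, hQ x k hk hxK⟩
    ⟨x.num, num_mem_numerators hxK, (Rat.cast_def x).symm⟩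

end Counting

theorem IsSelfSimilar.volume_pos {p q : ℕ} {B : Finset ℤ} {K : Set ℝ} (h : IsSelfSimilar q B K)
    (hq : 1 < q) (hpq : p.Coprime q) (hK : IsCompact K) (hinf : (Dset p ∩ K).Infinite) :
    0 < volume K := by
  by_cases hcard : ∀ n, q ^ n ≤ #(digitSums q B n)
  · exact zero_lt_one.trans_le (h.one_le_volume hq hK hinf.nonempty.right hcard)
  · push Not at hcard
    obtain ⟨m, hm⟩ := hcard
    exact absurd (h.finite_Dset_inter hq hpq hK.isBounded (tendsto_card_digitSums_div_pow hm)) hinf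

lemma intCast_mul_mem_Dset {p : ℕ} (D : ℤ) {x : ℝ} (hx : x ∈ Dset p) : (D : ℝ) * x ∈ Dset p := by
  obtain ⟨k, hk, m, rfl⟩ := hx
  exact ⟨k, hk, D * m, by push_cast; ring⟩

lemma volume_Kset_pos {p q : ℕ} (hq : 1 < q) (hpq : p.Coprime q) {A : Finset ℚ}
    (hinf : (Dset p ∩ Kset q A).Infinite) : 0 < volume (Kset q A) := by
  obtain ⟨D, hD, B, hB⟩ := exists_isSelfSimilar_smul_Kset hq A
  have hD' : (D : ℝ) ≠ 0 := by exact_mod_cast hD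
  have hinf' : (Dset p ∩ (D : ℝ) • Kset q A).Infinite := by
    refine (hinf.image (mul_right_injective₀ hD').injOn).mono ?_
    rintro _ ⟨x, ⟨hxp, hxK⟩, rfl⟩
    exact ⟨intCast_mul_mem_Dset D hxp, smul_mem_smul_set hxK⟩
  have hpos := hB.volume_pos hq hpq ((isCompact_Kset hq A).smul (D : ℝ)) hinf'
  rw [Measure.addHaar_smul] at hpos
  exact pos_of_mul_pos_right hpos zero_le

theorem self_similar_tile_iff_infinite_intersection_general (q : ℕ) (hq : 1 < q) (A : Finset ℚ) :
    0 < volume (Kset q A) ↔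
      ∃ p : ℕ, 2 ≤ p ∧ Nat.Coprime p q ∧ (Dset p ∩ Kset q A).Infinite := by
  constructor
  · intro hpos
    refine ⟨q + 1, by lia, by simp, ?_⟩
    exact infinite_inter_of_dense (dense_Dset (by lia)) (interior_Kset_nonempty hq hpos)
  · rintro ⟨p, -, hpq, hinf⟩
    exact volume_Kset_pos hq hpq hinf

theorem self_similar_tile_iff_infinite_intersection (q : ℕ) (hq : 3 ≤ q)
    (A : Finset ℚ) (hA : A.card = q) :
    0 < volume (Kset q A) ↔
      ∃ p : ℕ, 2 ≤ p ∧ Nat.Coprime p q ∧ (Dset p ∩ Kset q A).Infinite :=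
  self_similar_tile_iff_infinite_intersection_general q (by lia) A
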